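/- There exists a transitive subgroup G of the symmetric group S_8 with d(G) = 4; in particular, since ⌊(√3/2)·8/√(log₂ 8)⌋ = 4, the bound d(G) ≤ ⌊(√3/2)·n/√(log₂ n)⌋ for transitive subgroups of S_n is attained with equality at n = 8. -/

import Mathlib

/-- `minGen G` is the minimal size of a generating set of the group `G` (denoted `d(G)`). -/
noncomputable def minGen (G : Type*) [Group G] : ℕ :=
  sInf {n | ∃ S : Finset G, S.card = n ∧ Subgroup.closure (S : Set G) = ⊤}

/-- A subgroup of `Sym(Fin m)` is transitive if its natural action on the `m` points is
transitive. -/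
def IsTransitiveSub {m : ℕ} (H : Subgroup (Equiv.Perm (Fin m))) : Prop :=
  ∀ x y : Fin m, ∃ g ∈ H, g x = y

/-!
The extremal group is the extraspecial group `D₈ ∘ D₈`, seen as the Heisenberg group of a plane
over `𝔽₂`. For an `R`-module `V`, the affine maps `(t, u) ↦ (t + φ u + r, u + v)` of `R × V`, with
`φ ∈ V*`, `v ∈ V` and `r ∈ R`, form a transitive group. The commutator of the shear by `φ` and the
translation by `v` is the translation by `φ v ∈ R`, so as soon as some `φ` is surjective the group
is generated by a copy of `V*` and a copy of `V`. As it also maps onto `V* × V`, for `V` free over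
`R = ℤ/n` it needs exactly as many generators as `V* × V`, namely twice the rank of `V`. The case
`V = 𝔽₂²` has degree 8 and needs 4 generators.
-/

open Module

theorem minGen_eq_rank (G : Type*) [Group G] [Group.FG G] : minGen G = Group.rank G := by
  refine IsLeast.csInf_eq ⟨Group.rank_spec G, ?_⟩
  rintro _ ⟨S, rfl, hS⟩
  exact Group.rank_le hS

theorem group_rank_multiplicative (A : Type*) [AddGroup A] [AddGroup.FG A] :
    Group.rank (Multiplicative A) = AddGroup.rank A := by
  apply le_antisymm
  · obtain ⟨S, hcard, hS⟩ := AddGroup.rank_spec A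
    rw [← hcard, ← S.card_map Multiplicative.ofAdd.toEmbedding]
    refine Group.rank_le ?_
    rw [Finset.coe_map, Equiv.coe_toEmbedding, Equiv.image_eq_preimage_symm]
    exact (AddSubgroup.toSubgroup_closure (S : Set A)).symm.trans (by simp [hS])
  · obtain ⟨S, hcard, hS⟩ := Group.rank_spec (Multiplicative A)
    rw [← hcard, ← S.card_map Multiplicative.toAdd.toEmbedding]
    refine AddGroup.rank_le ?_
    rw [Finset.coe_map, Equiv.coe_toEmbedding, Equiv.image_eq_preimage_symm]
    exact (Subgroup.toAddSubgroup'_closure (S : Set (Multiplicative A))).symm.trans (by simp [hS])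

section RangeSupRange

variable {A B G : Type*} [Group A] [Group B] [Group G] [Group.FG A] [Group.FG B]
  {f : A →* G} {g : B →* G}

theorem group_fg_of_range_sup_range_eq_top (h : f.range ⊔ g.range = ⊤) : Group.FG G := by
  rw [Group.fg_def, ← h]
  exact ((Group.fg_iff_subgroup_fg _).mp inferInstance).sup
    ((Group.fg_iff_subgroup_fg _).mp inferInstance)

theorem group_rank_le_add_of_range_sup_range_eq_top [Group.FG G] (h : f.range ⊔ g.range = ⊤) :
    Group.rank G ≤ Group.rank A + Group.rank B := by
  classical
  obtain ⟨S, hScard, hS⟩ := Group.rank_spec A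
  obtain ⟨T, hTcard, hT⟩ := Group.rank_spec B
  have hgen : Subgroup.closure ((S.image f ∪ T.image g : Finset G) : Set G) = ⊤ := by
    rw [Finset.coe_union, Finset.coe_image, Finset.coe_image, Subgroup.closure_union,
      ← MonoidHom.map_closure, ← MonoidHom.map_closure, hS, hT, ← MonoidHom.range_eq_map,
      ← MonoidHom.range_eq_map, h]
  calc Group.rank G ≤ (S.image f ∪ T.image g).card := Group.rank_le hgen
    _ ≤ (S.image f).card + (T.image g).card := Finset.card_union_le _ _
    _ ≤ S.card + T.card := add_le_add Finset.card_image_le Finset.card_image_le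
    _ = Group.rank A + Group.rank B := by rw [hScard, hTcard]

end RangeSupRange

section ZMod

variable (n : ℕ) {W : Type*} [AddCommGroup W] [Module (ZMod n) W]

theorem span_zmod_toAddSubgroup (S : Set W) :
    (Submodule.span (ZMod n) S).toAddSubgroup = AddSubgroup.closure S := by
  refine le_antisymm ?_ ((AddSubgroup.closure_le _).mpr Submodule.subset_span)
  exact Submodule.span_le (p := AddSubgroup.toZModSubmodule n (AddSubgroup.closure S)).mpr
    AddSubgroup.subset_closure

theorem addSubgroup_closure_eq_top_iff_span_zmod_eq_top {S : Set W} :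
    AddSubgroup.closure S = ⊤ ↔ Submodule.span (ZMod n) S = ⊤ := by
  rw [← span_zmod_toAddSubgroup n, Submodule.toAddSubgroup_eq_top]

variable (W)

theorem addGroup_fg_of_module_finite_zmod [Module.Finite (ZMod n) W] : AddGroup.FG W := by
  obtain ⟨S, hS⟩ := Module.Finite.fg_top (R := ZMod n) (M := W)
  exact ⟨S, (addSubgroup_closure_eq_top_iff_span_zmod_eq_top n).mpr hS⟩

theorem addGroup_rank_eq_finrank_zmod [Nontrivial (ZMod n)] [Module.Free (ZMod n) W]
    [AddGroup.FG W] : AddGroup.rank W = finrank (ZMod n) W := by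
  obtain ⟨S, hScard, hS⟩ := AddGroup.rank_spec W
  rw [addSubgroup_closure_eq_top_iff_span_zmod_eq_top n] at hS
  apply le_antisymm
  · obtain ⟨T, hTcard, hT⟩ :=
      Submodule.FG.exists_span_finset_card_eq_spanFinrank (R := ZMod n) ⟨S, hS⟩
    rw [finrank_eq_spanFinrank_of_free, ← hTcard]
    exact AddGroup.rank_le ((addSubgroup_closure_eq_top_iff_span_zmod_eq_top n).mpr hT)
  · rw [← hScard, ← finrank_top, ← hS]
    exact finrank_span_finset_le_card S

end ZMod

theorem exists_surjective_dual (R V : Type*) [Semiring R] [AddCommMonoid V] [Module R V]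
    [Module.Free R V] [Nontrivial V] : ∃ φ : Dual R V, Function.Surjective φ := by
  obtain ⟨i⟩ := (Free.chooseBasis R V).index_nonempty
  exact ⟨(Free.chooseBasis R V).coord i, fun r => ⟨r • Free.chooseBasis R V i, by simp⟩⟩

theorem exists_isTransitiveSub_mulEquiv (G : Type*) {α : Type*} [Group G] [MulAction G α]
    [FaithfulSMul G α] [MulAction.IsPretransitive G α] {m : ℕ} (e : α ≃ Fin m) :
    ∃ H : Subgroup (Equiv.Perm (Fin m)), IsTransitiveSub H ∧ Nonempty (G ≃* H) := by
  let ρ : G →* Equiv.Perm (Fin m) :=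
    e.permCongrHom.toMonoidHom.comp (MulAction.toPermHom G α)
  have hρ : Function.Injective ρ :=
    e.permCongrHom.injective.comp MulAction.toPerm_injective
  refine ⟨ρ.range, fun x y => ?_, ⟨MonoidHom.ofInjective hρ⟩⟩
  obtain ⟨g, hg⟩ := MulAction.exists_smul_eq G (e.symm x) (e.symm y)
  exact ⟨ρ g, ⟨g, rfl⟩, e.eq_symm_apply.mp hg⟩

/-- The Heisenberg group of an `R`-module `V`, extending `V* × V` by `R`. The element
`⟨φ, v, r⟩` stands for the affine map `(t, u) ↦ (t + φ u + r, u + v)` of `R × V`, and the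
product is composition of maps. -/
@[ext]
structure Heisenberg (R V : Type*) [Ring R] [AddCommGroup V] [Module R V] where
  slope : Dual R V
  shift : V
  height : R

namespace Heisenberg

section Ring

variable {R V : Type*} [Ring R] [AddCommGroup V] [Module R V]

instance : Mul (Heisenberg R V) :=
  ⟨fun x y => ⟨x.slope + y.slope, x.shift + y.shift, x.height + y.height + x.slope y.shift⟩⟩

instance : One (Heisenberg R V) := ⟨⟨0, 0, 0⟩⟩

instance : Inv (Heisenberg R V) :=
  ⟨fun x => ⟨-x.slope, -x.shift, -x.height + x.slope x.shift⟩⟩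

theorem mul_def (x y : Heisenberg R V) : x * y =
    ⟨x.slope + y.slope, x.shift + y.shift, x.height + y.height + x.slope y.shift⟩ := rfl

theorem one_def : (1 : Heisenberg R V) = ⟨0, 0, 0⟩ := rfl

theorem inv_def (x : Heisenberg R V) :
    x⁻¹ = ⟨-x.slope, -x.shift, -x.height + x.slope x.shift⟩ := rfl

instance : Group (Heisenberg R V) :=
  Group.ofLeftAxioms
    (fun x y w => by
      simp only [mul_def, mk.injEq, LinearMap.add_apply, map_add]
      exact ⟨add_assoc _ _ _, add_assoc _ _ _, by abel⟩)
    (fun x => by simp [mul_def, one_def])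
    (fun x => by simp [mul_def, one_def, inv_def])

instance : MulAction (Heisenberg R V) (R × V) where
  smul x t := (t.1 + x.slope t.2 + x.height, t.2 + x.shift)
  one_smul t := by
    change (t.1 + (0 : Dual R V) t.2 + 0, t.2 + 0) = t
    simp
  mul_smul x y t := by
    change (t.1 + (x.slope + y.slope) t.2 + (x.height + y.height + x.slope y.shift),
        t.2 + (x.shift + y.shift)) =
      (t.1 + y.slope t.2 + y.height + x.slope (t.2 + y.shift) + x.height,
        t.2 + y.shift + x.shift)
    simp only [LinearMap.add_apply, map_add, Prod.mk.injEq]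
    constructor <;> abel

theorem smul_def (x : Heisenberg R V) (t : R × V) :
    x • t = (t.1 + x.slope t.2 + x.height, t.2 + x.shift) := rfl

instance : FaithfulSMul (Heisenberg R V) (R × V) where
  eq_of_smul_eq_smul {x y} h := by
    have hzero := h 0
    simp only [smul_def, Prod.fst_zero, Prod.snd_zero, map_zero, zero_add,
      Prod.mk.injEq] at hzero
    obtain ⟨hheight, hshift⟩ := hzero
    refine Heisenberg.ext (LinearMap.ext fun u => ?_) hshift hheight
    simpa [smul_def, hheight] using congrArg Prod.fst (h (0, u))

instance : MulAction.IsPretransitive (Heisenberg R V) (R × V) where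
  exists_smul_eq s t := ⟨⟨0, t.2 - s.2, t.1 - s.1⟩, by simp [smul_def]⟩

/-- The projection of the Heisenberg group onto `V* × V`, with kernel the central copy of `R`. -/
def toDualProd : Heisenberg R V →* Multiplicative (Dual R V × V) where
  toFun x := Multiplicative.ofAdd (x.slope, x.shift)
  map_one' := rfl
  map_mul' _ _ := rfl

theorem toDualProd_surjective : Function.Surjective (toDualProd (R := R) (V := V)) :=
  fun w => ⟨⟨w.toAdd.1, w.toAdd.2, 0⟩, rfl⟩

/-- The embedding of `V*` in the Heisenberg group as the shears `(t, u) ↦ (t + φ u, u)`. -/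
def ofSlope : Multiplicative (Dual R V) →* Heisenberg R V where
  toFun φ := ⟨φ.toAdd, 0, 0⟩
  map_one' := rfl
  map_mul' _ _ := by simp [mul_def]

/-- The embedding of `V` in the Heisenberg group as the translations `(t, u) ↦ (t, u + v)`. -/
def ofShift : Multiplicative V →* Heisenberg R V where
  toFun v := ⟨0, v.toAdd, 0⟩
  map_one' := rfl
  map_mul' _ _ := by simp [mul_def]

theorem eq_ofShift_mul_ofSlope_mul (x : Heisenberg R V) :
    x = ofShift (.ofAdd x.shift) * ofSlope (.ofAdd x.slope) * ⟨0, 0, x.height⟩ := by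
  simp [mul_def, ofShift, ofSlope]

open scoped commutatorElement in
theorem commutatorElement_ofSlope_ofShift (φ : Dual R V) (v : V) :
    ⁅ofSlope (.ofAdd φ), ofShift (.ofAdd v)⁆ = ⟨0, 0, φ v⟩ := by
  simp [commutatorElement_def, mul_def, inv_def, ofShift, ofSlope]

theorem range_ofSlope_sup_range_ofShift {φ : Dual R V} (hφ : Function.Surjective φ) :
    (ofSlope : _ →* Heisenberg R V).range ⊔ ofShift.range = ⊤ := by
  set K := (ofSlope : _ →* Heisenberg R V).range ⊔ ofShift.range
  have slope_mem (ψ : Dual R V) : ofSlope (.ofAdd ψ) ∈ K := Subgroup.mem_sup_left ⟨_, rfl⟩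
  have shift_mem (v : V) : ofShift (.ofAdd v) ∈ K := Subgroup.mem_sup_right ⟨_, rfl⟩
  have height_mem (r : R) : (⟨0, 0, r⟩ : Heisenberg R V) ∈ K := by
    obtain ⟨v, rfl⟩ := hφ r
    rw [← commutatorElement_ofSlope_ofShift, commutatorElement_def]
    exact K.mul_mem (K.mul_mem (K.mul_mem (slope_mem φ) (shift_mem v))
      (K.inv_mem (slope_mem φ))) (K.inv_mem (shift_mem v))
  refine (Subgroup.eq_top_iff' K).mpr fun x => ?_
  rw [eq_ofShift_mul_ofSlope_mul x]
  exact K.mul_mem (K.mul_mem (shift_mem _) (slope_mem _)) (height_mem _)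

end Ring

section ZMod

variable (n : ℕ) (V : Type*) [AddCommGroup V] [Module (ZMod n) V] [Module.Free (ZMod n) V]
  [Module.Finite (ZMod n) V] [Nontrivial V]

instance fg_zmod : Group.FG (Heisenberg (ZMod n) V) := by
  have := addGroup_fg_of_module_finite_zmod n V
  have := addGroup_fg_of_module_finite_zmod n (Dual (ZMod n) V)
  obtain ⟨φ, hφ⟩ := exists_surjective_dual (ZMod n) V
  exact group_fg_of_range_sup_range_eq_top (range_ofSlope_sup_range_ofShift hφ)

theorem rank_zmod : Group.rank (Heisenberg (ZMod n) V) = 2 * finrank (ZMod n) V := by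
  have := Module.nontrivial (ZMod n) V
  have := addGroup_fg_of_module_finite_zmod n V
  have := addGroup_fg_of_module_finite_zmod n (Dual (ZMod n) V)
  have := addGroup_fg_of_module_finite_zmod n (Dual (ZMod n) V × V)
  have dual_finrank : finrank (ZMod n) (Dual (ZMod n) V) = finrank (ZMod n) V :=
    finrank_linearMap_self (ZMod n) (ZMod n) V
  apply le_antisymm
  · obtain ⟨φ, hφ⟩ := exists_surjective_dual (ZMod n) V
    have hle := group_rank_le_add_of_range_sup_range_eq_top (range_ofSlope_sup_range_ofShift hφ)
    rwa [group_rank_multiplicative, group_rank_multiplicative, addGroup_rank_eq_finrank_zmod n,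
      addGroup_rank_eq_finrank_zmod n, dual_finrank, ← two_mul] at hle
  · have hle := Group.rank_le_of_surjective _ (toDualProd_surjective (R := ZMod n) (V := V))
    rwa [group_rank_multiplicative, addGroup_rank_eq_finrank_zmod n, finrank_prod, dual_finrank,
      ← two_mul] at hle

end ZMod

end Heisenberg

theorem exists_isTransitiveSub_pow_minGen_eq {n k : ℕ} (hn : 1 < n) (hk : 0 < k) :
    ∃ G : Subgroup (Equiv.Perm (Fin (n ^ (k + 1)))), IsTransitiveSub G ∧ minGen G = 2 * k := by
  have : Fact (1 < n) := ⟨hn⟩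
  have : NeZero n := ⟨(zero_lt_one.trans hn).ne'⟩
  have : NeZero k := ⟨hk.ne'⟩
  have e : ZMod n × (Fin k → ZMod n) ≃ Fin (n ^ (k + 1)) :=
    Fintype.equivFinOfCardEq (by simp [pow_succ'])
  obtain ⟨G, hG, ⟨f⟩⟩ :=
    exists_isTransitiveSub_mulEquiv (Heisenberg (ZMod n) (Fin k → ZMod n)) e
  have : Group.FG G := Group.fg_of_surjective (f := f.toMonoidHom) f.surjective
  refine ⟨G, hG, ?_⟩
  rw [minGen_eq_rank, ← Group.rank_congr f, Heisenberg.rank_zmod, finrank_fin_fun]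

theorem natFloor_sqrt_three_div_two_mul_eight_div_sqrt_logb_eight :
    ⌊(Real.sqrt 3 / 2) * (8 : ℝ) / Real.sqrt (Real.logb 2 (8 : ℝ))⌋₊ = 4 := by
  have hlog : Real.logb 2 8 = 3 := by
    rw [show (8 : ℝ) = 2 ^ 3 by norm_num, Real.logb_pow, Real.logb_self_eq_one one_lt_two]
    norm_num
  have hquot : Real.sqrt 3 / 2 * 8 / Real.sqrt 3 = (4 : ℕ) := by
    field_simp
    norm_num
  rw [hlog, hquot, Nat.floor_natCast]

/-- There is a transitive subgroup `G ≤ S₈` with `d(G) = 4`; since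
`⌊(√3/2)·8/√(log₂ 8)⌋ = 4`, the general bound is attained with equality at `n = 8`. -/
theorem bound_attained_deg8 :
    (∃ G : Subgroup (Equiv.Perm (Fin 8)), IsTransitiveSub G ∧ minGen ↥G = 4) ∧
    ⌊(Real.sqrt 3 / 2) * (8 : ℝ) / Real.sqrt (Real.logb 2 (8 : ℝ))⌋₊ = 4 :=
  ⟨exists_isTransitiveSub_pow_minGen_eq (n := 2) (k := 2) one_lt_two two_pos,
    natFloor_sqrt_three_div_two_mul_eight_div_sqrt_logb_eight⟩
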